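/- Let {F_n} be the Fibonacci sequence with F_0 = F_1 = 1, set ξ1 = ∏_{n=1}^∞ (1 + 1/F_n) and ξ2 = ∏_{n=3}^∞ (1 - 1/F_n), and let β = (√5 - 1)/2. Then the real numbers θ3(β) and θ4(β) are algebraic over the field ℚ(ξ1, ξ2). -/

import Mathlib

open scoped BigOperators

noncomputable section

/-- Fibonacci sequence with `F 0 = F 1 = 1`. -/
def F : ℕ → ℕ
  | 0 => 1
  | 1 => 1
  | n + 2 => F (n + 1) + F n

/-- The golden ratio conjugate `β = (√5 - 1)/2`. -/
noncomputable def β : ℝ := (Real.sqrt 5 - 1) / 2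

/-- Jacobi theta function `θ₂(q) = 2 q^{1/4} ∑_{n≥0} q^{n(n+1)}`. -/
noncomputable def θ2 (q : ℝ) : ℝ := 2 * q ^ ((1 : ℝ) / 4) * ∑' n : ℕ, q ^ (n * (n + 1))

/-- Jacobi theta function `θ₃(q) = 1 + 2 ∑_{n≥1} q^{n²}`. -/
noncomputable def θ3 (q : ℝ) : ℝ := 1 + 2 * ∑' n : ℕ, q ^ ((n + 1) ^ 2)

/-- Jacobi theta function `θ₄(q) = 1 + 2 ∑_{n≥1} (-1)^n q^{n²}`. -/
noncomputable def θ4 (q : ℝ) : ℝ := 1 + 2 * ∑' n : ℕ, (-1 : ℝ) ^ (n + 1) * q ^ ((n + 1) ^ 2)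

/-!
Put `Q = β²`. By Binet's formula each factor `1 ± 1 / F n` is a quotient of products of factors
`1 ± Q ^ k`, and multiplying two consecutive factors makes the products telescope into
`q`-Pochhammer symbols: up to nonzero elements of `ℚ(β)`, `ξ1` and `ξ2` are `(-Q; Q)_∞² / A` and
`(Q; Q)_∞² / A` with `A = (-Q; Q²)_∞`. Write also `B = (-Q²; Q²)_∞`, `C = (Q; Q²)_∞` and
`D = (Q²; Q²)_∞`, so that these quotients are `A B²` and `(C D)² / A`.

Euler's identity is `A B C = 1`. The triple product turns Jacobi's `θ₃⁴ = θ₄⁴ + θ₂⁴` at `Q` into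
`A⁸ = C⁸ + 16 Q B⁸`. These two equations determine `A`, `B`, `C` algebraically from `A B²`, and then
`D` from `(C D)² / A`. Finally `θ₃(β)²` and `θ₄(β)²` equal `(D A²)² ± β (2 D B²)²`, by the doubling
relations `θ₃(β)² = θ₃(β²)² + θ₂(β²)²` and `θ₄(β)² = θ₃(β²)² - θ₂(β²)²` and the triple product.
-/

open Filter Finset Topology

/-! ### `q`-Pochhammer symbols and Gaussian binomials -/

section Finite

variable {R : Type*} [CommRing R]

/-- The finite `q`-Pochhammer symbol `(a; q)_n`, whose ratios are the partial products of the
factors `1 ± 1 / F n`. -/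
def qPoch (a q : R) (n : ℕ) : R := ∏ k ∈ range n, (1 - a * q ^ k)

/-- The Gaussian binomial coefficient, as a polynomial expression in `q`, by recursion on the
`q`-Pascal rule, for use in the finite triple product. It vanishes when the lower index exceeds
the upper one. -/
def gaussBinom (q : R) : ℕ → ℕ → R
  | _, 0 => 1
  | 0, _ + 1 => 0
  | n + 1, j + 1 => gaussBinom q n j + q ^ (j + 1) * gaussBinom q n (j + 1)

@[simp]
theorem qPoch_zero (a q : R) : qPoch a q 0 = 1 := prod_range_zero _

theorem qPoch_succ (a q : R) (n : ℕ) : qPoch a q (n + 1) = qPoch a q n * (1 - a * q ^ n) :=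
  prod_range_succ _ _

theorem qPoch_succ' (a q : R) (n : ℕ) : qPoch a q (n + 1) = (1 - a) * qPoch (a * q) q n := by
  simp only [qPoch, prod_range_succ', pow_zero, mul_one, pow_succ', mul_assoc, mul_comm]

theorem qPoch_add (a q : R) (m n : ℕ) :
    qPoch a q (m + n) = qPoch a q m * qPoch (a * q ^ m) q n := by
  simp only [qPoch, prod_range_add, pow_add, mul_assoc]

@[simp]
theorem gaussBinom_zero_right (q : R) (n : ℕ) : gaussBinom q n 0 = 1 := by
  cases n <;> rfl

theorem gaussBinom_succ_succ (q : R) (n j : ℕ) :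
    gaussBinom q (n + 1) (j + 1) = gaussBinom q n j + q ^ (j + 1) * gaussBinom q n (j + 1) := rfl

theorem gaussBinom_of_lt (q : R) {n j : ℕ} (h : n < j) : gaussBinom q n j = 0 := by
  induction n generalizing j with
  | zero => obtain ⟨j, rfl⟩ := Nat.exists_eq_succ_of_ne_zero h.ne'; rfl
  | succ n ih =>
    obtain ⟨j, rfl⟩ := Nat.exists_eq_succ_of_ne_zero (Nat.ne_zero_of_lt h)
    rw [gaussBinom_succ_succ, ih (by omega), ih (by omega), mul_zero, add_zero]

@[simp]
theorem gaussBinom_self (q : R) (n : ℕ) : gaussBinom q n n = 1 := by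
  induction n with
  | zero => rfl
  | succ n ih =>
    rw [gaussBinom_succ_succ, ih, gaussBinom_of_lt q n.lt_succ_self, mul_zero, add_zero]

theorem gaussBinom_add_mul_qPoch_mul_qPoch (q : R) :
    ∀ i j : ℕ, gaussBinom q (i + j) i * qPoch q q i * qPoch q q j = qPoch q q (i + j)
  | 0, j => by simp
  | i + 1, 0 => by simp
  | i + 1, j + 1 => by
    have left := gaussBinom_add_mul_qPoch_mul_qPoch q i (j + 1)
    have right := gaussBinom_add_mul_qPoch_mul_qPoch q (i + 1) j
    rw [show i + 1 + j = i + (j + 1) by ring, qPoch_succ q q i] at right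
    rw [qPoch_succ q q j] at left
    rw [show i + 1 + (j + 1) = i + (j + 1) + 1 by ring, gaussBinom_succ_succ,
      qPoch_succ q q i, qPoch_succ q q j, qPoch_succ q q (i + (j + 1))]
    linear_combination (1 - q ^ (i + 1)) * left + q ^ (i + 1) * (1 - q ^ (j + 1)) * right

theorem q_binomial_theorem (x q : R) (n : ℕ) :
    qPoch (-x) q n = ∑ j ∈ range (n + 1), gaussBinom q n j * q ^ j.choose 2 * x ^ j := by
  induction n generalizing x with
  | zero => simp
  | succ n ih =>
    have pascal (j : ℕ) : gaussBinom q (n + 1) (j + 1) * q ^ (j + 1).choose 2 * x ^ (j + 1) =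
        x * (gaussBinom q n j * q ^ j.choose 2 * (x * q) ^ j) +
          gaussBinom q n (j + 1) * q ^ (j + 1).choose 2 * (x * q) ^ (j + 1) := by
      rw [gaussBinom_succ_succ, Nat.choose_succ_succ, Nat.choose_one_right]
      ring
    have shift := sum_range_succ'
      (fun j => gaussBinom q n j * q ^ j.choose 2 * (x * q) ^ j) (n + 1)
    rw [sum_range_succ, gaussBinom_of_lt q n.lt_succ_self] at shift
    rw [qPoch_succ', neg_mul, ih, sum_range_succ' _ (n + 1), sum_congr rfl fun j _ => pascal j,
      sum_add_distrib, ← mul_sum]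
    simp only [gaussBinom_zero_right, Nat.choose_zero_succ, pow_zero] at shift ⊢
    linear_combination shift

end Finite

section FiniteTripleProduct

variable {K : Type*} [Field K]

theorem prod_mul_zpow_neg_odd {q : K} (hq : q ≠ 0) (z : K) (N : ℕ) :
    ∏ k ∈ range N, z * q ^ (-(2 * k + 1) : ℤ) = z ^ N * q ^ (-(N : ℤ) ^ 2) := by
  induction N with
  | zero => simp
  | succ N ih =>
    rw [prod_range_succ, ih, mul_mul_mul_comm, ← pow_succ, ← zpow_add₀ hq]
    congr 2
    push_cast
    ring

theorem qPoch_reflect_sq {q z : K} (hq : q ≠ 0) (hz : z ≠ 0) (N : ℕ) :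
    qPoch (-(z * q ^ (1 - 2 * N : ℤ))) (q ^ 2) N =
      z ^ N * q ^ (-(N : ℤ) ^ 2) * qPoch (-(z⁻¹ * q)) (q ^ 2) N := by
  rw [← prod_mul_zpow_neg_odd hq z N, qPoch, qPoch, ← prod_range_reflect, ← prod_mul_distrib]
  refine prod_congr rfl fun k hk => ?_
  have hk : k + 1 ≤ N := mem_range.1 hk
  have left : q ^ (1 - 2 * N : ℤ) * (q ^ 2) ^ (N - 1 - k) = q ^ (-(2 * k + 1) : ℤ) := by
    rw [← pow_mul, ← zpow_natCast, ← zpow_add₀ hq]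
    congr 1
    push_cast [Nat.sub_sub, Nat.add_comm 1 k, hk]
    ring
  have right : q ^ (-(2 * k + 1) : ℤ) * (q * (q ^ 2) ^ k) = 1 := by
    rw [← pow_mul, ← pow_succ', zpow_neg]
    exact_mod_cast inv_mul_cancel₀ (pow_ne_zero (2 * k + 1) hq)
  linear_combination z * left - z * z⁻¹ * right - mul_inv_cancel₀ hz

theorem gaussBinom_term_shift {q z : K} (hq : q ≠ 0) (hz : z ≠ 0) (N j : ℕ) :
    (q ^ 2) ^ j.choose 2 * (z * q ^ (1 - 2 * N : ℤ)) ^ j =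
      z ^ N * q ^ (-(N : ℤ) ^ 2) * (q ^ (j - N : ℤ) ^ 2 * z ^ (j - N : ℤ)) := by
  have two_mul_choose : (2 * j.choose 2 : ℤ) = j ^ 2 - j := by
    induction j with
    | zero => simp
    | succ j ih =>
      rw [Nat.choose_succ_succ, Nat.choose_one_right]
      push_cast
      linear_combination ih
  have hzpow : z ^ N * z ^ (j - N : ℤ) = z ^ j := by
    rw [← zpow_natCast, ← zpow_add₀ hz, add_sub_cancel, zpow_natCast]
  have hqpow : (q ^ 2) ^ j.choose 2 * (q ^ (1 - 2 * N : ℤ)) ^ j =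
      q ^ (-(N : ℤ) ^ 2) * q ^ (j - N : ℤ) ^ 2 := by
    rw [← pow_mul, ← zpow_natCast, ← zpow_natCast, ← zpow_mul, ← zpow_add₀ hq, ← zpow_add₀ hq]
    congr 1
    push_cast
    linear_combination two_mul_choose
  rw [mul_pow]
  linear_combination z ^ j * hqpow - q ^ (-(N : ℤ) ^ 2) * q ^ (j - N : ℤ) ^ 2 * hzpow

theorem finite_jacobi_triple_product {q z : K} (hq : q ≠ 0) (hz : z ≠ 0) (N : ℕ) :
    qPoch (-(z * q)) (q ^ 2) N * qPoch (-(z⁻¹ * q)) (q ^ 2) N =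
      ∑ n ∈ Icc (-N : ℤ) N, gaussBinom (q ^ 2) (2 * N) (N + n).toNat * (q ^ n ^ 2 * z ^ n) := by
  have reindex : ∑ n ∈ Icc (-N : ℤ) N,
      gaussBinom (q ^ 2) (2 * N) (N + n).toNat * (q ^ n ^ 2 * z ^ n) =
      ∑ j ∈ range (2 * N + 1),
        gaussBinom (q ^ 2) (2 * N) j * (q ^ (j - N : ℤ) ^ 2 * z ^ (j - N : ℤ)) := by
    refine sum_nbij' (fun n => (N + n).toNat) (fun j => j - N) ?_ ?_ ?_ ?_ ?_ <;>
      intro n hn <;> simp only [mem_Icc, mem_range] at hn ⊢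
    any_goals omega
    rw [Int.toNat_of_nonneg (by omega), add_sub_cancel_left]
  have split : (z * q ^ (1 - 2 * N : ℤ)) * (q ^ 2) ^ N = z * q := by
    rw [mul_assoc, ← pow_mul, ← zpow_natCast, ← zpow_add₀ hq]
    simp
  have binomial := q_binomial_theorem (z * q ^ (1 - 2 * N : ℤ)) (q ^ 2) (2 * N)
  rw [two_mul N, qPoch_add, neg_mul, split, qPoch_reflect_sq hq hz, ← two_mul] at binomial
  have prefactor_ne_zero : z ^ N * q ^ (-(N : ℤ) ^ 2) ≠ 0 :=
    mul_ne_zero (pow_ne_zero _ hz) (zpow_ne_zero _ hq)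
  refine mul_left_cancel₀ prefactor_ne_zero ?_
  rw [mul_comm (qPoch _ _ _), ← mul_assoc, binomial, reindex, mul_sum]
  refine sum_congr rfl fun j _ => ?_
  rw [mul_assoc, gaussBinom_term_shift hq hz]
  ring

end FiniteTripleProduct

/-! ### The Jacobi triple product -/

/-- The infinite `q`-Pochhammer symbol `(a; q)_∞`, the limit of `qPoch a q n`; meaningful when
`‖q‖ < 1`, a junk value when the product does not converge unconditionally. -/
def qPochInf {R : Type*} [CommRing R] [TopologicalSpace R] (a q : R) : R :=
  ∏' k : ℕ, (1 - a * q ^ k)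

/-- The two-variable theta series `∑_{n ∈ ℤ} q^{n²} z^n`, meaningful when `‖q‖ < 1`. The classical
theta values at nome `q` are `θ₃ = thetaSum q 1`, `θ₄ = thetaSum q (-1)` and
`θ₂ = q^{1/4} * thetaSum q q`. -/
def thetaSum {𝕜 : Type*} [Field 𝕜] [TopologicalSpace 𝕜] (q z : 𝕜) : 𝕜 :=
  ∑' n : ℤ, q ^ n ^ 2 * z ^ n

section Infinite

variable {𝕜 : Type*} [NormedField 𝕜] {q : 𝕜}

theorem summable_norm_neg_mul_pow (hq : ‖q‖ < 1) (a : 𝕜) :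
    Summable fun k : ℕ => ‖-(a * q ^ k)‖ := by
  simpa only [norm_neg, norm_mul, norm_pow] using
    (summable_geometric_of_lt_one (norm_nonneg q) hq).mul_left ‖a‖

theorem mul_pow_ne_one {a : 𝕜} (ha : ‖a‖ < 1) (hq : ‖q‖ ≤ 1) (k : ℕ) : a * q ^ k ≠ 1 := by
  intro h
  have hnorm : ‖a‖ * ‖q‖ ^ k = 1 := by rw [← norm_pow, ← norm_mul, h, norm_one]
  exact (mul_lt_one_of_nonneg_of_lt_one_left (norm_nonneg a) ha
    (pow_le_one₀ (norm_nonneg q) hq)).ne hnorm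

theorem qPoch_ne_zero {a : 𝕜} (ha : ‖a‖ < 1) (hq : ‖q‖ ≤ 1) (n : ℕ) : qPoch a q n ≠ 0 :=
  prod_ne_zero_iff.2 fun k _ => sub_ne_zero.2 (mul_pow_ne_one ha hq k).symm

theorem gaussBinom_add_eq_div (hq : ‖q‖ < 1) (i j : ℕ) :
    gaussBinom q (i + j) i = qPoch q q (i + j) / (qPoch q q i * qPoch q q j) := by
  rw [eq_div_iff (mul_ne_zero (qPoch_ne_zero hq hq.le i) (qPoch_ne_zero hq hq.le j)), ← mul_assoc,
    gaussBinom_add_mul_qPoch_mul_qPoch]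

theorem norm_sq_lt_one (hq : ‖q‖ < 1) : ‖q ^ 2‖ < 1 := by
  rw [norm_pow]
  exact pow_lt_one₀ (norm_nonneg q) hq two_ne_zero

theorem summable_norm_theta_nat (hq : ‖q‖ < 1) (z : 𝕜) :
    Summable fun n : ℕ => ‖q ^ n ^ 2 * z ^ n‖ := by
  have small : ∀ᶠ n : ℕ in atTop, ‖q ^ n * z‖ < 1 / 2 := by
    have lim := ((tendsto_pow_atTop_nhds_zero_of_norm_lt_one hq).mul_const z).norm
    rw [zero_mul, norm_zero] at lim
    exact lim.eventually_lt_const one_half_pos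
  refine Summable.of_norm_bounded_eventually_nat summable_geometric_two ?_
  filter_upwards [small] with n hn
  rw [norm_norm, sq, pow_mul, ← mul_pow, norm_pow]
  exact pow_le_pow_left₀ (norm_nonneg _) hn.le n

theorem summable_norm_theta (hq : ‖q‖ < 1) (z : 𝕜) :
    Summable fun n : ℤ => ‖q ^ n ^ 2 * z ^ n‖ := by
  refine Summable.of_nat_of_neg ?_ ?_
  · exact_mod_cast summable_norm_theta_nat hq z
  · simp only [neg_sq, zpow_neg, ← inv_zpow]
    exact_mod_cast summable_norm_theta_nat hq z⁻¹

variable [CompleteSpace 𝕜]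

theorem multipliable_one_sub_mul_pow (hq : ‖q‖ < 1) (a : 𝕜) :
    Multipliable fun k : ℕ => 1 - a * q ^ k := by
  simpa only [sub_eq_add_neg] using
    multipliable_one_add_of_summable (summable_norm_neg_mul_pow hq a)

theorem tendsto_qPoch (hq : ‖q‖ < 1) (a : 𝕜) :
    Tendsto (qPoch a q) atTop (𝓝 (qPochInf a q)) :=
  (multipliable_one_sub_mul_pow hq a).hasProd.tendsto_prod_nat

theorem qPochInf_ne_zero {a : 𝕜} (ha : ‖a‖ < 1) (hq : ‖q‖ < 1) : qPochInf a q ≠ 0 := by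
  have factor_ne_zero (k : ℕ) : 1 + -(a * q ^ k) ≠ 0 := by
    rw [← sub_eq_add_neg]
    exact sub_ne_zero.2 (mul_pow_ne_one ha hq.le k).symm
  simpa only [qPochInf, sub_eq_add_neg] using
    tprod_one_add_ne_zero_of_summable factor_ne_zero (summable_norm_neg_mul_pow hq a)

theorem qPochInf_eq_mul (hq : ‖q‖ < 1) (a : 𝕜) : qPochInf a q = (1 - a) * qPochInf (a * q) q :=
  tendsto_nhds_unique ((tendsto_add_atTop_iff_nat 1).2 (tendsto_qPoch hq a)) <| by
    simpa only [qPoch_succ'] using (tendsto_qPoch hq (a * q)).const_mul (1 - a)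

theorem qPochInf_even_mul_odd (hq : ‖q‖ < 1) (a : 𝕜) :
    qPochInf a (q ^ 2) * qPochInf (a * q) (q ^ 2) = qPochInf a q := by
  have even (k : ℕ) : 1 - a * (q ^ 2) ^ k = 1 - a * q ^ (2 * k) := by ring
  have odd (k : ℕ) : 1 - a * q * (q ^ 2) ^ k = 1 - a * q ^ (2 * k + 1) := by ring
  have hq2 := norm_sq_lt_one hq
  have meven := multipliable_one_sub_mul_pow hq2 a
  have modd := multipliable_one_sub_mul_pow hq2 (a * q)
  simp only [even, odd] at meven modd
  simp only [qPochInf, even, odd]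
  exact tprod_even_mul_odd (f := fun k => 1 - a * q ^ k) meven modd

theorem qPochInf_mul_neg (hq : ‖q‖ < 1) (a : 𝕜) :
    qPochInf a q * qPochInf (-a) q = qPochInf (a ^ 2) (q ^ 2) := by
  rw [qPochInf, qPochInf, qPochInf, ← (multipliable_one_sub_mul_pow hq a).tprod_mul
    (multipliable_one_sub_mul_pow hq (-a))]
  exact tprod_congr fun k => by ring

theorem qPochInf_neg_mul_qPochInf_sq (hq : ‖q‖ < 1) :
    qPochInf (-q) q * qPochInf q (q ^ 2) = 1 := by
  have hq2 := norm_sq_lt_one hq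
  have double := qPochInf_mul_neg hq q
  rw [← qPochInf_even_mul_odd hq q, ← sq] at double
  refine mul_left_cancel₀ (qPochInf_ne_zero hq2 hq2) ?_
  linear_combination double

theorem exists_norm_gaussBinom_le (hq : ‖q‖ < 1) :
    ∃ C : ℝ, ∀ n j : ℕ, ‖gaussBinom q n j‖ ≤ C := by
  have lim := (tendsto_qPoch hq q).norm
  obtain ⟨M, hM⟩ := lim.bddAbove_range
  obtain ⟨M', hM'⟩ := (lim.inv₀ (norm_ne_zero_iff.2 (qPochInf_ne_zero hq hq))).bddAbove_range
  simp only [mem_upperBounds, Set.forall_mem_range] at hM hM'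
  have hM_nonneg : 0 ≤ M := (norm_nonneg _).trans (hM 0)
  have hM'_nonneg : 0 ≤ M' := (inv_nonneg.2 (norm_nonneg _)).trans (hM' 0)
  refine ⟨M * M' * M', fun n j => ?_⟩
  rcases lt_or_ge n j with h | h
  · rw [gaussBinom_of_lt q h, norm_zero]
    positivity
  · obtain ⟨i, rfl⟩ := Nat.exists_eq_add_of_le h
    rw [gaussBinom_add_eq_div hq, norm_div, norm_mul, div_mul_eq_div_div, div_eq_mul_inv,
      div_eq_mul_inv]
    gcongr
    exacts [hM _, hM' _, hM' _]

theorem tendsto_gaussBinom_two_mul (hq : ‖q‖ < 1) (n : ℤ) :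
    Tendsto (fun N : ℕ => gaussBinom q (2 * N) (N + n).toNat) atTop (𝓝 (qPochInf q q)⁻¹) := by
  have toNat_atTop (m : ℤ) : Tendsto (fun N : ℕ => (N + m).toNat) atTop atTop :=
    tendsto_atTop.2 fun b => by
      filter_upwards [eventually_ge_atTop (b + m.natAbs)] with N hN
      omega
  have lim := tendsto_qPoch hq q
  have lim_ne_zero := qPochInf_ne_zero hq hq
  have quotient := (lim.comp (tendsto_id.const_mul_atTop' two_pos)).div
    ((lim.comp (toNat_atTop n)).mul (lim.comp (toNat_atTop (-n))))
    (mul_ne_zero lim_ne_zero lim_ne_zero)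
  rw [← div_div, div_self lim_ne_zero, one_div] at quotient
  refine quotient.congr' ?_
  filter_upwards [eventually_ge_atTop n.natAbs] with N hN
  have index_add : (N + n).toNat + (N + -n).toNat = 2 * N := by omega
  simp only [Function.comp_apply, id, ← index_add, gaussBinom_add_eq_div hq, Pi.div_apply]

theorem jacobi_triple_product (hq0 : q ≠ 0) (hq : ‖q‖ < 1) {z : 𝕜} (hz : z ≠ 0) :
    thetaSum q z =
      qPochInf (q ^ 2) (q ^ 2) * qPochInf (-(z * q)) (q ^ 2) * qPochInf (-(z⁻¹ * q)) (q ^ 2) := by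
  have hq2 := norm_sq_lt_one hq
  obtain ⟨C, hC⟩ := exists_norm_gaussBinom_le hq2
  let term (N : ℕ) (n : ℤ) : 𝕜 := (Icc (-N : ℤ) N : Set ℤ).indicator
    (fun n => gaussBinom (q ^ 2) (2 * N) (N + n).toNat * (q ^ n ^ 2 * z ^ n)) n
  have tsum_term (N : ℕ) : ∑' n, term N n =
      qPoch (-(z * q)) (q ^ 2) N * qPoch (-(z⁻¹ * q)) (q ^ 2) N := by
    rw [finite_jacobi_triple_product hq0 hz, sum_eq_tsum_indicator]
  have term_lim (n : ℤ) : Tendsto (term · n) atTop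
      (𝓝 ((qPochInf (q ^ 2) (q ^ 2))⁻¹ * (q ^ n ^ 2 * z ^ n))) := by
    refine ((tendsto_gaussBinom_two_mul hq2 n).mul_const _).congr' ?_
    filter_upwards [eventually_ge_atTop n.natAbs] with N hN
    have hmem : n ∈ (Icc (-N : ℤ) N : Set ℤ) := mem_coe.2 (mem_Icc.2 ⟨by omega, by omega⟩)
    simp only [term, Set.indicator_of_mem hmem]
  have term_bound (N : ℕ) (n : ℤ) : ‖term N n‖ ≤ C * ‖q ^ n ^ 2 * z ^ n‖ := by
    refine (norm_indicator_le_norm_self _ _).trans ?_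
    rw [norm_mul]
    gcongr
    exact hC _ _
  have lim_sum := tendsto_tsum_of_dominated_convergence
    ((summable_norm_theta hq z).mul_left C) term_lim (.of_forall term_bound)
  have lim_prod := (tendsto_qPoch hq2 (-(z * q))).mul (tendsto_qPoch hq2 (-(z⁻¹ * q)))
  simp only [tsum_term, tsum_mul_left] at lim_sum
  rw [mul_assoc, tendsto_nhds_unique lim_prod lim_sum,
    mul_inv_cancel_left₀ (qPochInf_ne_zero hq2 hq2), thetaSum]

end Infinite

/-! ### Quadratic relations between theta series -/

theorem isCompl_range_add_sub :
    IsCompl (Set.range fun p : ℤ × ℤ => (p.1 + p.2, p.1 - p.2))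
      (Set.range fun p : ℤ × ℤ => (p.1 + p.2 + 1, p.1 - p.2)) := by
  refine eq_compl_iff_isCompl.1 (Set.ext fun ⟨m, n⟩ => ?_)
  simp only [Set.mem_compl_iff, Set.mem_range, Prod.mk.injEq, Prod.exists, not_exists, not_and]
  constructor
  · rintro ⟨a, b, hm, hn⟩ c d
    omega
  · intro h
    have := h ((m + n - 1) / 2) ((m - n - 1) / 2)
    exact ⟨(m + n) / 2, (m - n) / 2, by omega, by omega⟩

theorem hasSum_of_even_of_odd {M : Type*} [AddCommMonoid M] [TopologicalSpace M] [ContinuousAdd M]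
    {f : ℤ × ℤ → M} {x y : M} (even : HasSum (fun p : ℤ × ℤ => f (p.1 + p.2, p.1 - p.2)) x)
    (odd : HasSum (fun p : ℤ × ℤ => f (p.1 + p.2 + 1, p.1 - p.2)) y) : HasSum f (x + y) := by
  have even_injective : Function.Injective fun p : ℤ × ℤ => (p.1 + p.2, p.1 - p.2) := by
    rintro ⟨a, b⟩ ⟨c, d⟩ h
    simp only [Prod.mk.injEq] at h ⊢
    omega
  have odd_injective : Function.Injective fun p : ℤ × ℤ => (p.1 + p.2 + 1, p.1 - p.2) := by
    rintro ⟨a, b⟩ ⟨c, d⟩ h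
    simp only [Prod.mk.injEq] at h ⊢
    omega
  exact HasSum.add_isCompl isCompl_range_add_sub
    ((even_injective.hasSum_range_iff (f := f)).2 even)
    ((odd_injective.hasSum_range_iff (f := f)).2 odd)

section ThetaTerms

variable {K : Type*} [Field K] {q z w : K}

theorem theta_term_mul_even (hq : q ≠ 0) (hz : z ≠ 0) (hw : w ≠ 0) (a b : ℤ) :
    q ^ (a + b) ^ 2 * z ^ (a + b) * (q ^ (a - b) ^ 2 * w ^ (a - b)) =
      (q ^ 2) ^ a ^ 2 * (z * w) ^ a * ((q ^ 2) ^ b ^ 2 * (z / w) ^ b) := by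
  have q_exponent : q ^ (a + b) ^ 2 * q ^ (a - b) ^ 2 = (q ^ 2) ^ a ^ 2 * (q ^ 2) ^ b ^ 2 := by
    rw [← zpow_natCast q 2, ← zpow_mul, ← zpow_mul, ← zpow_add₀ hq, ← zpow_add₀ hq]
    congr 1
    push_cast
    ring
  rw [zpow_add₀ hz, zpow_sub₀ hw, mul_zpow, div_zpow]
  linear_combination z ^ a * z ^ b * (w ^ a / w ^ b) * q_exponent

theorem theta_term_mul_odd (hq : q ≠ 0) (hz : z ≠ 0) (hw : w ≠ 0) (a b : ℤ) :
    q ^ (a + b + 1) ^ 2 * z ^ (a + b + 1) * (q ^ (a - b) ^ 2 * w ^ (a - b)) =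
      q * z * ((q ^ 2) ^ a ^ 2 * (q ^ 2 * (z * w)) ^ a *
        ((q ^ 2) ^ b ^ 2 * (q ^ 2 * (z / w)) ^ b)) := by
  have q_exponent : q ^ (a + b + 1) ^ 2 = q ^ (a + b) ^ 2 * (q ^ 2) ^ a * (q ^ 2) ^ b * q := by
    rw [← zpow_natCast q 2, ← zpow_mul, ← zpow_mul, ← zpow_add₀ hq, ← zpow_add₀ hq,
      ← zpow_add_one₀ hq]
    congr 1
    push_cast
    ring
  rw [q_exponent, zpow_add_one₀ hz, mul_zpow (q ^ 2), mul_zpow (q ^ 2)]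
  linear_combination q * z * (q ^ 2) ^ a * (q ^ 2) ^ b * theta_term_mul_even hq hz hw a b

end ThetaTerms

section ThetaRelations

variable {𝕜 : Type*} [NormedField 𝕜] {q : 𝕜}

theorem mul_thetaSum_sq_mul (hq0 : q ≠ 0) {z : 𝕜} (hz : z ≠ 0) :
    q * z * thetaSum q (q ^ 2 * z) = thetaSum q z := by
  rw [thetaSum, thetaSum, ← (Equiv.addRight 1).tsum_eq (fun n => q ^ n ^ 2 * z ^ n),
    ← tsum_mul_left]
  refine tsum_congr fun n => ?_
  have q_exponent : q ^ (n + 1) ^ 2 = q * (q ^ n ^ 2 * (q ^ 2) ^ n) := by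
    rw [← zpow_natCast q 2, ← zpow_mul, ← zpow_add₀ hq0, ← zpow_one_add₀ hq0]
    congr 1
    push_cast
    ring
  rw [Equiv.coe_addRight, mul_zpow, zpow_add_one₀ hz, q_exponent]
  ring

variable [CompleteSpace 𝕜]

theorem hasSum_thetaSum_mul_thetaSum (hq : ‖q‖ < 1) (z w : 𝕜) :
    HasSum (fun p : ℤ × ℤ => q ^ p.1 ^ 2 * z ^ p.1 * (q ^ p.2 ^ 2 * w ^ p.2))
      (thetaSum q z * thetaSum q w) := by
  have hz := summable_norm_theta hq z
  have hw := summable_norm_theta hq w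
  rw [thetaSum, thetaSum, tsum_mul_tsum_of_summable_norm hz hw]
  exact (summable_mul_of_summable_norm hz hw).hasSum

theorem thetaSum_mul_thetaSum (hq0 : q ≠ 0) (hq : ‖q‖ < 1) {z w : 𝕜} (hz : z ≠ 0) (hw : w ≠ 0) :
    thetaSum q z * thetaSum q w =
      thetaSum (q ^ 2) (z * w) * thetaSum (q ^ 2) (z / w) +
        q * z * (thetaSum (q ^ 2) (q ^ 2 * (z * w)) * thetaSum (q ^ 2) (q ^ 2 * (z / w))) := by
  have hq2 := norm_sq_lt_one hq
  refine (hasSum_thetaSum_mul_thetaSum hq z w).unique (hasSum_of_even_of_odd ?_ ?_)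
  · simpa only [theta_term_mul_even hq0 hz hw] using
      hasSum_thetaSum_mul_thetaSum hq2 (z * w) (z / w)
  · simpa only [theta_term_mul_odd hq0 hz hw] using
      (hasSum_thetaSum_mul_thetaSum hq2 (q ^ 2 * (z * w)) (q ^ 2 * (z / w))).mul_left (q * z)

theorem thetaSum_one_sq (hq0 : q ≠ 0) (hq : ‖q‖ < 1) :
    thetaSum q 1 ^ 2 = thetaSum (q ^ 2) 1 ^ 2 + q * thetaSum (q ^ 2) (q ^ 2) ^ 2 := by
  have product := thetaSum_mul_thetaSum hq0 hq (one_ne_zero (α := 𝕜)) one_ne_zero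
  rw [mul_one, div_one, mul_one, mul_one] at product
  linear_combination product

theorem thetaSum_neg_one_sq (hq0 : q ≠ 0) (hq : ‖q‖ < 1) :
    thetaSum q (-1) ^ 2 = thetaSum (q ^ 2) 1 ^ 2 - q * thetaSum (q ^ 2) (q ^ 2) ^ 2 := by
  have hneg : (-1 : 𝕜) ≠ 0 := neg_ne_zero.2 one_ne_zero
  have product := thetaSum_mul_thetaSum hq0 hq hneg hneg
  rw [neg_mul_neg, div_self hneg, mul_one, mul_one] at product
  linear_combination product

theorem thetaSum_self_sq (hq0 : q ≠ 0) (hq : ‖q‖ < 1) :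
    thetaSum q q ^ 2 = 2 * thetaSum (q ^ 2) 1 * thetaSum (q ^ 2) (q ^ 2) := by
  have product := thetaSum_mul_thetaSum hq0 hq hq0 hq0
  have shift := mul_thetaSum_sq_mul (pow_ne_zero 2 hq0) (one_ne_zero (α := 𝕜))
  have hpow : q ^ 2 * (q * q) = (q ^ 2) ^ 2 * 1 := by ring
  rw [div_self hq0, mul_one, hpow, ← sq q] at product
  linear_combination product + thetaSum (q ^ 2) (q ^ 2) * shift

theorem thetaSum_one_pow_four (hq0 : q ≠ 0) (hq : ‖q‖ < 1) :
    thetaSum q 1 ^ 4 = thetaSum q (-1) ^ 4 + q * thetaSum q q ^ 4 := by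
  have pow_four (x : 𝕜) : x ^ 4 = (x ^ 2) ^ 2 := pow_mul x 2 2
  rw [pow_four, pow_four, pow_four, thetaSum_one_sq hq0 hq, thetaSum_neg_one_sq hq0 hq,
    thetaSum_self_sq hq0 hq]
  ring

theorem thetaSum_one_eq (hq0 : q ≠ 0) (hq : ‖q‖ < 1) :
    thetaSum q 1 = qPochInf (q ^ 2) (q ^ 2) * qPochInf (-q) (q ^ 2) ^ 2 := by
  rw [jacobi_triple_product hq0 hq one_ne_zero, inv_one, one_mul]
  ring

theorem thetaSum_neg_one_eq (hq0 : q ≠ 0) (hq : ‖q‖ < 1) :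
    thetaSum q (-1) = qPochInf (q ^ 2) (q ^ 2) * qPochInf q (q ^ 2) ^ 2 := by
  rw [jacobi_triple_product hq0 hq (neg_ne_zero.2 one_ne_zero), inv_neg_one, neg_one_mul,
    neg_neg]
  ring

theorem thetaSum_self_eq (hq0 : q ≠ 0) (hq : ‖q‖ < 1) :
    thetaSum q q = 2 * qPochInf (q ^ 2) (q ^ 2) * qPochInf (-q ^ 2) (q ^ 2) ^ 2 := by
  rw [jacobi_triple_product hq0 hq hq0, inv_mul_cancel₀ hq0,
    qPochInf_eq_mul (norm_sq_lt_one hq) (-1), neg_one_mul, ← sq]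
  ring

theorem qPochInf_neg_pow_eight (hq0 : q ≠ 0) (hq : ‖q‖ < 1) :
    qPochInf (-q) (q ^ 2) ^ 8 =
      qPochInf q (q ^ 2) ^ 8 + 16 * q * qPochInf (-q ^ 2) (q ^ 2) ^ 8 := by
  have quartic := thetaSum_one_pow_four hq0 hq
  have hq2 := norm_sq_lt_one hq
  rw [thetaSum_one_eq hq0 hq, thetaSum_neg_one_eq hq0 hq, thetaSum_self_eq hq0 hq] at quartic
  refine mul_left_cancel₀ (pow_ne_zero 4 (qPochInf_ne_zero hq2 hq2)) ?_
  linear_combination quartic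

theorem qPochInf_neg_mul_neg_sq_mul (hq : ‖q‖ < 1) :
    qPochInf (-q) (q ^ 2) * qPochInf (-q ^ 2) (q ^ 2) * qPochInf q (q ^ 2) = 1 := by
  rw [← qPochInf_neg_mul_qPochInf_sq hq, ← qPochInf_even_mul_odd hq (-q), neg_mul, ← sq]

end ThetaRelations

theorem thetaSum_eq_one_add_two_mul_tsum {𝕜 : Type*} [NormedField 𝕜] [CompleteSpace 𝕜] {q z : 𝕜}
    (hq : ‖q‖ < 1) (hz : z⁻¹ = z) :
    thetaSum q z = 1 + 2 * ∑' n : ℕ, z ^ (n + 1) * q ^ (n + 1) ^ 2 := by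
  have even_term : Function.Even fun n : ℤ => q ^ n ^ 2 * z ^ n := fun n => by
    simp only [neg_sq, zpow_neg, ← inv_zpow, hz]
  rw [thetaSum, tsum_int_eq_zero_add_two_mul_tsum_pnat even_term (summable_norm_theta hq z).of_norm,
    tsum_pnat_eq_tsum_succ (f := fun n => q ^ (n : ℤ) ^ 2 * z ^ (n : ℤ))]
  rw [zero_pow two_ne_zero, zpow_zero, zpow_zero, mul_one, nsmul_eq_mul, Nat.cast_ofNat]
  congr 2
  refine tsum_congr fun n => ?_
  rw [mul_comm]
  norm_cast

theorem θ3_eq_thetaSum {q : ℝ} (hq : ‖q‖ < 1) : θ3 q = thetaSum q 1 := by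
  simp only [θ3, thetaSum_eq_one_add_two_mul_tsum hq inv_one, one_pow, one_mul]

theorem θ4_eq_thetaSum {q : ℝ} (hq : ‖q‖ < 1) : θ4 q = thetaSum q (-1) := by
  rw [θ4, thetaSum_eq_one_add_two_mul_tsum hq inv_neg_one]

/-! ### Algebraicity of theta values -/

section Algebraicity

variable {K L : Type*} [Field K] [Field L] [Algebra K L]

theorem mem_algebraicClosure_of_pow_mem {x : L} {n : ℕ} (hn : 0 < n)
    (h : x ^ n ∈ algebraicClosure K L) : x ∈ algebraicClosure K L :=
  mem_algebraicClosure_iff.2 (.of_pow hn (mem_algebraicClosure_iff.1 h))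

-- With `u = A * C ^ 2 = (A * B ^ 2)⁻¹`, the octic relation becomes
-- `C ^ 24 * (u ^ 8 + 16 * Q) = u ^ 16`.
theorem mem_algebraicClosure_of_octic {A B C Q : L} (hABC : A * B * C = 1)
    (octic : A ^ 8 = C ^ 8 + 16 * Q * B ^ 8) (hQ : Q ∈ algebraicClosure K L)
    (hAB : A * B ^ 2 ∈ algebraicClosure K L) :
    A ∈ algebraicClosure K L ∧ B ∈ algebraicClosure K L ∧ C ∈ algebraicClosure K L := by
  have hA : A ≠ 0 := left_ne_zero_of_mul (left_ne_zero_of_mul_eq_one hABC)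
  have hC : C ≠ 0 := right_ne_zero_of_mul_eq_one hABC
  have hB_eq : B = (A * C)⁻¹ := eq_inv_of_mul_eq_one_left (by linear_combination hABC)
  have hu_eq : A * C ^ 2 = (A * B ^ 2)⁻¹ := by
    rw [hB_eq]
    field_simp
  have hu : A * C ^ 2 ∈ algebraicClosure K L := hu_eq ▸ inv_mem hAB
  have hC_pow : C ^ 24 * ((A * C ^ 2) ^ 8 + 16 * Q) = (A * C ^ 2) ^ 16 := by
    rw [hB_eq] at octic
    field_simp at octic
    linear_combination -C ^ 24 * octic
  have hden : (A * C ^ 2) ^ 8 + 16 * Q ≠ 0 := by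
    refine right_ne_zero_of_mul (a := C ^ 24) ?_
    rw [hC_pow]
    positivity
  have hC_mem : C ∈ algebraicClosure K L := by
    refine mem_algebraicClosure_of_pow_mem (n := 24) (by norm_num) ?_
    rw [eq_div_of_mul_eq hden hC_pow]
    exact div_mem (pow_mem hu 16) (add_mem (pow_mem hu 8) (mul_mem (ofNat_mem _ 16) hQ))
  have hA_mem : A ∈ algebraicClosure K L := by
    rw [eq_div_of_mul_eq (pow_ne_zero 2 hC) (rfl : A * C ^ 2 = _)]
    exact div_mem hu (pow_mem hC_mem 2)
  exact ⟨hA_mem, hB_eq ▸ inv_mem (mul_mem hA_mem hC_mem), hC_mem⟩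

theorem thetaSum_mem_algebraicClosure {𝕜 : Type*} [NormedField 𝕜] [CompleteSpace 𝕜] [Algebra K 𝕜]
    {q : 𝕜} (hq0 : q ≠ 0) (hq : ‖q‖ < 1) (hqK : q ∈ algebraicClosure K 𝕜)
    (hneg : qPochInf (-q ^ 2) (q ^ 2) ^ 2 / qPochInf (-q ^ 2) ((q ^ 2) ^ 2) ∈ algebraicClosure K 𝕜)
    (hpos : qPochInf (q ^ 2) (q ^ 2) ^ 2 / qPochInf (-q ^ 2) ((q ^ 2) ^ 2) ∈ algebraicClosure K 𝕜) :
    thetaSum q 1 ∈ algebraicClosure K 𝕜 ∧ thetaSum q (-1) ∈ algebraicClosure K 𝕜 := by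
  have hQ0 := pow_ne_zero 2 hq0
  have hQ := norm_sq_lt_one hq
  have hQK := pow_mem hqK 2
  have theta_one_sq := thetaSum_one_sq hq0 hq
  have theta_neg_one_sq := thetaSum_neg_one_sq hq0 hq
  rw [thetaSum_one_eq hQ0 hQ, thetaSum_self_eq hQ0 hQ] at theta_one_sq theta_neg_one_sq
  have hABC := qPochInf_neg_mul_neg_sq_mul hQ
  have octic := qPochInf_neg_pow_eight hQ0 hQ
  rw [← qPochInf_even_mul_odd hQ, neg_mul, ← sq (q ^ 2)] at hneg
  rw [← qPochInf_even_mul_odd hQ, ← sq (q ^ 2)] at hpos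
  set A := qPochInf (-q ^ 2) ((q ^ 2) ^ 2)
  set B := qPochInf (-(q ^ 2) ^ 2) ((q ^ 2) ^ 2)
  set C := qPochInf (q ^ 2) ((q ^ 2) ^ 2)
  set D := qPochInf ((q ^ 2) ^ 2) ((q ^ 2) ^ 2)
  have hA : A ≠ 0 := left_ne_zero_of_mul (left_ne_zero_of_mul_eq_one hABC)
  have hC : C ≠ 0 := right_ne_zero_of_mul_eq_one hABC
  have hAB : A * B ^ 2 ∈ algebraicClosure K 𝕜 := by
    convert hneg using 1
    field_simp
  obtain ⟨hA_mem, hB_mem, hC_mem⟩ := mem_algebraicClosure_of_octic hABC octic hQK hAB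
  have hD_sq : D ^ 2 ∈ algebraicClosure K 𝕜 := by
    have hD_eq : D ^ 2 = (C * D) ^ 2 / A * A / C ^ 2 := by field_simp
    exact hD_eq ▸ div_mem (mul_mem hpos hA_mem) (pow_mem hC_mem 2)
  have hD_mem := mem_algebraicClosure_of_pow_mem two_pos hD_sq
  have hA_sq : (D * A ^ 2) ^ 2 ∈ algebraicClosure K 𝕜 :=
    pow_mem (mul_mem hD_mem (pow_mem hA_mem 2)) 2
  have hB_sq : q * (2 * D * B ^ 2) ^ 2 ∈ algebraicClosure K 𝕜 :=
    mul_mem hqK (pow_mem (mul_mem (mul_mem (ofNat_mem _ 2) hD_mem) (pow_mem hB_mem 2)) 2)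
  exact ⟨mem_algebraicClosure_of_pow_mem two_pos (theta_one_sq ▸ add_mem hA_sq hB_sq),
    mem_algebraicClosure_of_pow_mem two_pos (theta_neg_one_sq ▸ sub_mem hA_sq hB_sq)⟩

end Algebraicity

/-! ### The Fibonacci products -/

theorem β_sq : β ^ 2 = 1 - β := by
  have sqrt_five : Real.sqrt 5 ^ 2 = 5 := Real.sq_sqrt (by norm_num)
  rw [β]
  linear_combination sqrt_five / 4

theorem β_pos : 0 < β :=
  half_pos (sub_pos.2 (Real.lt_sqrt_of_sq_lt (by norm_num)))

theorem β_lt_one : β < 1 := by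
  nlinarith [β_sq, β_pos]

theorem F_mul_β_pow (n : ℕ) : (F n : ℝ) * ((1 + β ^ 2) * β ^ n) = 1 - (-β ^ 2) ^ (n + 1) := by
  induction n using Nat.twoStepInduction with
  | zero => simp [F]
  | one =>
    simp only [F]
    push_cast
    linear_combination (1 + β ^ 2) * β_sq
  | more n ih ih' =>
    simp only [F]
    push_cast
    linear_combination β * ih' + β ^ 2 * ih + (1 - (-β ^ 2) ^ (n + 2)) * β_sq

theorem F_pos : ∀ n, 0 < F n
  | 0 => one_pos
  | 1 => one_pos
  | n + 2 => Nat.add_pos_left (F_pos (n + 1)) _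

theorem one_add_div_F (ε : ℝ) (n : ℕ) :
    1 + ε / F n = (1 - (-β ^ 2) ^ (n + 1) + ε * (1 + β ^ 2) * β ^ n) /
      (1 - (-β ^ 2) ^ (n + 1)) := by
  have hβ := β_pos.ne'
  have hF : (F n : ℝ) ≠ 0 := Nat.cast_ne_zero.2 (F_pos n).ne'
  have hden : 1 + β ^ 2 ≠ 0 := by positivity
  rw [← F_mul_β_pow]
  field_simp

theorem one_add_div_F_odd {ε : ℝ} (hε : ε ^ 2 = 1) (k : ℕ) :
    1 + ε / F (2 * k + 3) =
      (1 + ε * (β ^ 2) ^ (k + 1)) * (1 - ε * (β ^ 2) ^ (k + 3)) / (1 - (β ^ 2) ^ (2 * k + 4)) := by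
  have hpow : (-β ^ 2) ^ (2 * k + 3 + 1) = (β ^ 2) ^ (2 * k + 4) := Even.neg_pow ⟨k + 2, by ring⟩ _
  rw [one_add_div_F, hpow]
  congr 1
  linear_combination (β ^ 2) ^ (2 * k + 4) * hε + ε * (1 + β ^ 2) * (β ^ 2) ^ (k + 1) * β_sq

theorem one_add_div_F_even {ε : ℝ} (hε : ε ^ 2 = 1) (k : ℕ) :
    1 + ε / F (2 * k + 4) =
      (1 + ε * (β ^ 2) ^ (k + 2)) * (1 + ε * (β ^ 2) ^ (k + 3)) / (1 + (β ^ 2) ^ (2 * k + 5)) := by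
  have hpow : (-β ^ 2) ^ (2 * k + 4 + 1) = -(β ^ 2) ^ (2 * k + 5) :=
    Odd.neg_pow ⟨k + 2, by ring⟩ _
  rw [one_add_div_F, hpow, sub_neg_eq_add]
  congr 1
  linear_combination -(β ^ 2) ^ (2 * k + 5) * hε

theorem norm_β_lt_one : ‖β‖ < 1 := by
  rw [Real.norm_of_nonneg β_pos.le]
  exact β_lt_one

theorem β_sq_pow_ne_one {n : ℕ} (hn : n ≠ 0) : (β ^ 2) ^ n ≠ 1 :=
  (pow_lt_one₀ (sq_nonneg β) (pow_lt_one₀ β_pos.le β_lt_one two_ne_zero) hn).ne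

theorem one_add_div_F_mul_one_add_div_F {ε : ℝ} (hε : ε ^ 2 = 1) (k : ℕ) :
    (1 + ε / F (2 * k + 3)) * (1 + ε / F (2 * k + 4)) =
      (1 + ε * (β ^ 2) ^ (k + 1)) * (1 + ε * (β ^ 2) ^ (k + 2)) * (1 - (β ^ 2) ^ (2 * k + 6)) /
        ((1 - (β ^ 2) ^ (2 * k + 4)) * (1 + (β ^ 2) ^ (2 * k + 5))) := by
  rw [one_add_div_F_odd hε, one_add_div_F_even hε, div_mul_div_comm]
  congr 1
  linear_combination -(1 + ε * (β ^ 2) ^ (k + 1)) * (1 + ε * (β ^ 2) ^ (k + 2)) *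
    (β ^ 2) ^ (2 * k + 6) * hε

theorem prod_one_add_div_F {ε : ℝ} (hε : ε ^ 2 = 1) (N : ℕ) :
    ∏ n ∈ Icc 3 (2 * N + 2), (1 + ε / F n) =
      qPoch (-(ε * β ^ 2)) (β ^ 2) N * qPoch (-(ε * β ^ 2) * β ^ 2) (β ^ 2) N *
          qPoch ((β ^ 2) ^ 4 * (β ^ 2) ^ 2) ((β ^ 2) ^ 2) N /
        (qPoch ((β ^ 2) ^ 4) ((β ^ 2) ^ 2) N *
          qPoch (-β ^ 2 * (β ^ 2) ^ 2 * (β ^ 2) ^ 2) ((β ^ 2) ^ 2) N) := by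
  induction N with
  | zero => simp
  | succ N ih =>
    rw [show 2 * (N + 1) + 2 = 2 * N + 3 + 1 by ring, prod_Icc_succ_top (by omega),
      prod_Icc_succ_top (by omega), ih, mul_assoc, one_add_div_F_mul_one_add_div_F hε,
      div_mul_div_comm]
    simp only [qPoch_succ]
    congr 1 <;> ring

theorem one_add_mul_β_sq_ne_zero {ε : ℝ} (hε : ε ^ 2 = 1) : 1 + ε * β ^ 2 ≠ 0 := fun h =>
  β_sq_pow_ne_one two_ne_zero (by linear_combination (ε * β ^ 2 - 1) * h - (β ^ 2) ^ 2 * hε)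

theorem tendsto_prod_one_add_div_F {ε : ℝ} (hε : ε ^ 2 = 1) :
    Tendsto (fun N : ℕ => ∏ n ∈ Icc 3 (2 * N + 2), (1 + ε / F n)) atTop
      (𝓝 ((1 + β ^ 2) * (1 + (β ^ 2) ^ 3) / ((1 + ε * β ^ 2) * (1 - (β ^ 2) ^ 4)) *
        (qPochInf (-(ε * β ^ 2)) (β ^ 2) ^ 2 / qPochInf (-β ^ 2) ((β ^ 2) ^ 2)))) := by
  simp only [prod_one_add_div_F hε]
  have hQ4 : 1 - (β ^ 2) ^ 4 ≠ 0 := sub_ne_zero.2 (β_sq_pow_ne_one four_ne_zero).symm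
  have hεQ := one_add_mul_β_sq_ne_zero hε
  have hQ : ‖β ^ 2‖ < 1 := norm_sq_lt_one norm_β_lt_one
  have hQ0 : 0 < β ^ 2 := pow_pos β_pos 2
  set Q := β ^ 2
  have hQ2 := norm_sq_lt_one hQ
  have split_ε := qPochInf_eq_mul hQ (-(ε * Q))
  have split_four := qPochInf_eq_mul hQ2 (Q ^ 4)
  have split_odd : qPochInf (-Q) (Q ^ 2) =
      (1 + Q) * (1 + Q ^ 3) * qPochInf (-Q * Q ^ 2 * Q ^ 2) (Q ^ 2) := by
    rw [qPochInf_eq_mul hQ2 (-Q), qPochInf_eq_mul hQ2 (-Q * Q ^ 2)]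
    ring
  have four_ne_zero : qPochInf (Q ^ 4) (Q ^ 2) ≠ 0 :=
    qPochInf_ne_zero (by rw [pow_mul Q 2 2]; exact norm_sq_lt_one hQ2) hQ2
  have six_ne_zero := right_ne_zero_of_mul (split_four ▸ four_ne_zero)
  have five_ne_zero : qPochInf (-Q * Q ^ 2 * Q ^ 2) (Q ^ 2) ≠ 0 :=
    right_ne_zero_of_mul (split_odd ▸ qPochInf_ne_zero (by rwa [norm_neg]) hQ2)
  have lim := (((tendsto_qPoch hQ (-(ε * Q))).mul (tendsto_qPoch hQ (-(ε * Q) * Q))).mul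
    (tendsto_qPoch hQ2 (Q ^ 4 * Q ^ 2))).div
      ((tendsto_qPoch hQ2 (Q ^ 4)).mul (tendsto_qPoch hQ2 (-Q * Q ^ 2 * Q ^ 2)))
      (mul_ne_zero four_ne_zero five_ne_zero)
  rw [sub_neg_eq_add] at split_ε
  rw [split_ε, split_four] at lim
  rw [split_ε, split_odd]
  simp only [Pi.div_def] at lim
  convert lim using 2
  set P := qPochInf (-(ε * Q) * Q) Q
  set X := qPochInf (Q ^ 4 * Q ^ 2) (Q ^ 2)
  set Y := qPochInf (-Q * Q ^ 2 * Q ^ 2) (Q ^ 2)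
  field_simp

theorem qPochInf_ratio_mem {S : Subfield ℝ} {ε ξ : ℝ} (hβ : β ∈ S) (hε : ε ^ 2 = 1) (hξ : ξ ∈ S)
    (lim : Tendsto (fun N : ℕ => ∏ n ∈ Icc 3 N, (1 + ε / F n)) atTop (𝓝 ξ)) :
    qPochInf (-(ε * β ^ 2)) (β ^ 2) ^ 2 / qPochInf (-β ^ 2) ((β ^ 2) ^ 2) ∈ S := by
  have hεS : ε ∈ S := by
    rcases sq_eq_one_iff.1 hε with rfl | rfl
    exacts [one_mem S, neg_mem (one_mem S)]
  have subsequence : Tendsto (fun N : ℕ => 2 * N + 2) atTop atTop :=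
    tendsto_atTop_mono (fun N : ℕ => (by omega : N ≤ 2 * N + 2)) tendsto_id
  have hξ_eq := tendsto_nhds_unique (lim.comp subsequence) (tendsto_prod_one_add_div_F hε)
  have factor_mem : (1 + β ^ 2) * (1 + (β ^ 2) ^ 3) /
      ((1 + ε * β ^ 2) * (1 - (β ^ 2) ^ 4)) ∈ S := by
    have hQ := pow_mem hβ 2
    exact div_mem (mul_mem (add_mem (one_mem S) hQ) (add_mem (one_mem S) (pow_mem hQ 3)))
      (mul_mem (add_mem (one_mem S) (mul_mem hεS hQ)) (sub_mem (one_mem S) (pow_mem hQ 4)))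
  have factor_ne_zero : (1 + β ^ 2) * (1 + (β ^ 2) ^ 3) /
      ((1 + ε * β ^ 2) * (1 - (β ^ 2) ^ 4)) ≠ 0 :=
    div_ne_zero (by positivity) (mul_ne_zero (one_add_mul_β_sq_ne_zero hε)
      (sub_ne_zero.2 (β_sq_pow_ne_one four_ne_zero).symm))
  rw [eq_div_of_mul_eq factor_ne_zero ((mul_comm _ _).trans hξ_eq.symm)]
  exact div_mem hξ factor_mem

theorem tendsto_prod_Icc_three {ξ : ℝ}
    (lim : Tendsto (fun N : ℕ => ∏ n ∈ Icc 1 N, (1 + 1 / (F n : ℝ))) atTop (𝓝 ξ)) :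
    Tendsto (fun N : ℕ => ∏ n ∈ Icc 3 N, (1 + 1 / (F n : ℝ))) atTop (𝓝 (ξ / 3)) := by
  refine (lim.div_const 3).congr' ?_
  filter_upwards [eventually_ge_atTop 2] with N hN
  rw [← mul_prod_Ioc_eq_prod_Icc (one_le_two.trans hN), ← Icc_add_one_left_eq_Ioc,
    one_add_one_eq_two, ← mul_prod_Ioc_eq_prod_Icc hN, ← Icc_add_one_left_eq_Ioc]
  simp only [F]
  push_cast
  ring

theorem β_mem_algebraicClosure (K : Type*) [Field K] [Algebra K ℝ] : β ∈ algebraicClosure K ℝ := by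
  have sqrt_five_mem : Real.sqrt 5 ∈ algebraicClosure K ℝ := by
    refine mem_algebraicClosure_of_pow_mem two_pos ?_
    rw [Real.sq_sqrt (by norm_num)]
    exact ofNat_mem _ 5
  exact div_mem (sub_mem sqrt_five_mem (one_mem _)) (ofNat_mem _ 2)

theorem theta_values_algebraic_over_xi (ξ1 ξ2 : ℝ)
    (h1 : Filter.Tendsto (fun N : ℕ => ∏ n ∈ Finset.Icc 1 N, (1 + 1 / (F n : ℝ)))
      Filter.atTop (nhds ξ1))
    (h2 : Filter.Tendsto (fun N : ℕ => ∏ n ∈ Finset.Icc 3 N, (1 - 1 / (F n : ℝ)))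
      Filter.atTop (nhds ξ2)) :
    IsAlgebraic (↥(IntermediateField.adjoin ℚ {ξ1, ξ2})) (θ3 β) ∧
    IsAlgebraic (↥(IntermediateField.adjoin ℚ {ξ1, ξ2})) (θ4 β) := by
  set K := IntermediateField.adjoin ℚ {ξ1, ξ2}
  have mem_of_mem_K {x : ℝ} (hx : x ∈ K) : x ∈ algebraicClosure K ℝ :=
    (algebraicClosure K ℝ).algebraMap_mem ⟨x, hx⟩
  have hξ1 : ξ1 ∈ algebraicClosure K ℝ :=
    mem_of_mem_K (IntermediateField.subset_adjoin ℚ _ (Set.mem_insert ξ1 _))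
  have hξ2 : ξ2 ∈ algebraicClosure K ℝ :=
    mem_of_mem_K (IntermediateField.subset_adjoin ℚ _ (Set.mem_insert_of_mem ξ1 rfl))
  have hβ := β_mem_algebraicClosure K
  have ratio_neg := qPochInf_ratio_mem (S := (algebraicClosure K ℝ).toSubfield) (ε := 1) hβ
    (one_pow 2) (div_mem hξ1 (ofNat_mem _ 3)) (tendsto_prod_Icc_three h1)
  have ratio_pos := qPochInf_ratio_mem (S := (algebraicClosure K ℝ).toSubfield) (ε := -1) hβ
    neg_one_sq hξ2 (by simpa only [neg_div, ← sub_eq_add_neg] using h2)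
  rw [one_mul] at ratio_neg
  rw [neg_one_mul, neg_neg] at ratio_pos
  rw [θ3_eq_thetaSum norm_β_lt_one, θ4_eq_thetaSum norm_β_lt_one, ← mem_algebraicClosure_iff,
    ← mem_algebraicClosure_iff]
  exact thetaSum_mem_algebraicClosure β_pos.ne' norm_β_lt_one hβ ratio_neg ratio_pos
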